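/- Let f be a homeomorphism of the d-dimensional torus 𝕋^d homotopic to the identity, with lift F, and let K ⊆ 𝕋^d be a minimal set of f. Suppose f is an irrational pseudo-rotation on K with rotation vector ρ and has bounded mean motion on K. Then f restricted to K is regularly semi-conjugate to the irrational rotation R_ρ : 𝕋^d → 𝕋^d, x ↦ x + ρ mod ℤ^d; that is, there exists a continuous surjection h : K → 𝕋^d with h∘f = R_ρ∘h on K which admits a lift H : π⁻¹(K) → ℝ^d (π_d∘H = h∘π) satisfying H∘F = H + ρ and sup_{z ∈ π⁻¹(K)} ‖H(z) − z‖ < ∞. -/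

import Mathlib

open Filter Topology

local notation "⟪" x ", " y "⟫" => @inner ℝ _ _ x y

noncomputable section

/-- Euclidean space `ℝ^d`. -/
abbrev Rd (d : ℕ) := EuclideanSpace ℝ (Fin d)

/-- The `d`-torus `𝕋^d = ℝ^d/ℤ^d`, realized as a product of circles. -/
abbrev Torus (d : ℕ) := Fin d → AddCircle (1 : ℝ)

/-- The quotient map `π : ℝ^d → 𝕋^d`. -/
def projT {d : ℕ} (z : Rd d) : Torus d := fun i => (z i : AddCircle (1 : ℝ))

/-- An integer vector viewed as an element of `ℝ^d`. -/
def intVec {d : ℕ} (m : Fin d → ℤ) : Rd d := WithLp.toLp 2 fun i => (m i : ℝ)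

/-- A real vector viewed as an element of `ℝ^k`. -/
def vecR {k : ℕ} (ρ : Fin k → ℝ) : Rd k := WithLp.toLp 2 fun i => ρ i

/-- `F : ℝ^d → ℝ^d` is a lift of `f : 𝕋^d → 𝕋^d`:  `π ∘ F = f ∘ π` and
`F (z + m) = F z + m` for every integer vector `m`.  The existence of such a lift
expresses that `f` is homotopic to the identity. -/
def IsLift {d : ℕ} (f : Torus d ≃ₜ Torus d) (F : Rd d ≃ₜ Rd d) : Prop :=
  (∀ z : Rd d, projT (F z) = f (projT z)) ∧
  ∀ (z : Rd d) (m : Fin d → ℤ), F (z + intVec m) = F z + intVec m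

/-- The `n`-th iterate (`n ∈ ℤ`) of a homeomorphism. -/
def iterZ {X : Type*} [TopologicalSpace X] (F : X ≃ₜ X) (n : ℤ) : X → X := ⇑(F.toEquiv ^ n)

/-- `K` is a minimal set of `f`: nonempty, compact, invariant, and every orbit in `K`
is dense in `K`. -/
def IsMinimalSet {d : ℕ} (f : Torus d ≃ₜ Torus d) (K : Set (Torus d)) : Prop :=
  K.Nonempty ∧ IsCompact K ∧ f '' K = K ∧
  ∀ x ∈ K, K ⊆ closure (Set.range fun n : ℕ => (⇑f)^[n] x)

/-- `ρ ∈ ℝ^k` is totally irrational: `1, ρ₁, …, ρ_k` are linearly independent over `ℚ`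
(equivalently, over `ℤ`). -/
def TotallyIrrational {k : ℕ} (ρ : Fin k → ℝ) : Prop :=
  ∀ (m : Fin k → ℤ) (n : ℤ), (∑ i, (m i : ℝ) * ρ i) = (n : ℝ) → m = 0 ∧ n = 0

/-- The rotation `R_ρ : 𝕋^k → 𝕋^k`, `x ↦ x + ρ mod ℤ^k`. -/
def rotT {k : ℕ} (ρ : Fin k → ℝ) : Torus k → Torus k :=
  fun x i => x i + (ρ i : AddCircle (1 : ℝ))

/-- `f` (with lift `F`) is a pseudo-rotation with rotation vector `ρ` on the invariant
set `K`: `(Fⁿ z − z)/n → ρ` for every `z ∈ π⁻¹(K)`. -/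
def IsPseudoRotationOn {d : ℕ} (F : Rd d ≃ₜ Rd d) (ρ : Rd d) (K : Set (Torus d)) : Prop :=
  ∀ z : Rd d, projT z ∈ K →
    Tendsto (fun n : ℕ => (n : ℝ)⁻¹ • ((⇑F)^[n] z - z)) atTop (𝓝 ρ)

/-- Bounded mean motion on `K`: `‖Fⁿ z − z − n ρ‖ ≤ c` for all `n ∈ ℤ` and `z ∈ π⁻¹(K)`. -/
def BddMeanMotionOn {d : ℕ} (F : Rd d ≃ₜ Rd d) (ρ : Rd d) (K : Set (Torus d)) : Prop :=
  ∃ c : ℝ, 0 ≤ c ∧ ∀ (n : ℤ) (z : Rd d), projT z ∈ K →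
    ‖iterZ F n z - z - (n : ℝ) • ρ‖ ≤ c

/-!
The displacement `z ↦ F z - z - ρ` descends to a continuous function `φ` on the torus, whose
Birkhoff sums over `f` are the deviations `Fⁿ z - z - n ρ`. Bounded mean motion and the
Gottschalk–Hedlund theorem then write `φ = u ∘ f - u` on `K` with `u` continuous, so
`H z = z - u (π z)` satisfies `H ∘ F = H + ρ` and descends to a semi-conjugacy `h`. The image `h(K)`
is nonempty, closed and invariant under `R_ρ`, hence the whole torus by Kronecker's theorem.
-/

section Minimality

variable {X : Type*} [TopologicalSpace X] {f : X → X} {K : Set X}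

/-- Minimality of the map `f` on `K`: `K` is forward invariant and lies in the closure of every
forward orbit in it. The empty set is allowed, and `K` need not be closed. -/
structure IsMinimalOn (f : X → X) (K : Set X) : Prop where
  mapsTo : Set.MapsTo f K K
  subset_closure_orbit : ∀ x ∈ K, K ⊆ closure (Set.range fun n : ℕ => f^[n] x)

theorem IsMinimalOn.eq_of_lowerSemicontinuousOn (hK : IsMinimalOn f K) {D : X → ℝ}
    (hD : LowerSemicontinuousOn D K) (hle : ∀ x ∈ K, D (f x) ≤ D x) {x y : X} (hx : x ∈ K)
    (hy : y ∈ K) : D x = D y := by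
  have horbit : ∀ x ∈ K, ∀ n : ℕ, D (f^[n] x) ≤ D x := by
    intro x hx n
    induction n with
    | zero => rfl
    | succ n ih =>
      rw [Function.iterate_succ_apply']
      exact (hle _ (hK.mapsTo.iterate n hx)).trans ih
  suffices hle_of_mem : ∀ x ∈ K, ∀ y ∈ K, D y ≤ D x from
    le_antisymm (hle_of_mem y hy x hx) (hle_of_mem x hx y hy)
  intro x hx y hy
  by_contra! hlt
  have hnear : ∀ᶠ z in 𝓝 y, z ∈ K → D x < D z := eventually_nhdsWithin_iff.1 (hD y hy (D x) hlt)
  obtain ⟨_, hz, n, rfl⟩ := mem_closure_iff_nhds.1 (hK.subset_closure_orbit x hx hy) _ hnear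
  exact (hz (hK.mapsTo.iterate n hx)).not_ge (horbit x hx n)

theorem continuousOn_of_lowerSemicontinuousOn_of_add_eq {A B : X → ℝ}
    (hA : LowerSemicontinuousOn A K) (hB : LowerSemicontinuousOn B K) {C : ℝ}
    (hAB : ∀ x ∈ K, A x + B x = C) : ContinuousOn A K := by
  refine continuousOn_iff_lower_upperSemicontinuousOn.2 ⟨hA, fun x hx y hy => ?_⟩
  filter_upwards [hB x hx (C - y) (by linarith [hAB x hx]), self_mem_nhdsWithin] with z hz hzK
  linarith [hAB z hzK]

end Minimality

section GottschalkHedlund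

theorem birkhoffSum_sub_sub_const {E : Type*} [AddCommGroup E] (F : E → E) (ρ : E) (n : ℕ) (z : E) :
    birkhoffSum F (fun w => F w - w - ρ) n z = F^[n] z - z - n • ρ := by
  simp only [birkhoffSum, ← Function.iterate_succ_apply', Finset.sum_sub_distrib, Finset.sum_const,
    Finset.card_range, Finset.sum_range_sub (fun k => F^[k] z), Function.iterate_zero_apply]

theorem semiconj_birkhoffSum_apply {X Y M : Type*} [AddCommMonoid M] {p : X → Y} {F : X → X}
    {f : Y → Y} (h : Function.Semiconj p F f) (φ : Y → M) (n : ℕ) (x : X) :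
    birkhoffSum f φ n (p x) = birkhoffSum F (φ ∘ p) n x := by
  simp only [birkhoffSum, Function.comp_apply, (h.iterate_right _).eq]

variable {X : Type*} {f : X → X} {K : Set X}

/-- The supremum of the Birkhoff sums of `φ`, which inverts the coboundary operator in the
Gottschalk–Hedlund theorem. It takes the value `0` where the sums are unbounded above. -/
def birkhoffSup (f : X → X) (φ : X → ℝ) (x : X) : ℝ :=
  ⨆ n, birkhoffSum f φ n x

theorem add_birkhoffSup_apply_le {φ : X → ℝ} {x : X}
    (hx : BddAbove (Set.range fun n => birkhoffSum f φ n x)) :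
    φ x + birkhoffSup f φ (f x) ≤ birkhoffSup f φ x := by
  rw [← le_sub_iff_add_le']
  refine ciSup_le fun n => ?_
  rw [le_sub_iff_add_le', ← birkhoffSum_succ']
  exact le_ciSup hx (n + 1)

variable [TopologicalSpace X]

theorem continuousOn_birkhoffSum {M : Type*} [AddCommMonoid M] [TopologicalSpace M]
    [ContinuousAdd M] {φ : X → M} (hmaps : Set.MapsTo f K K) (hf : ContinuousOn f K)
    (hφ : ContinuousOn φ K) (n : ℕ) : ContinuousOn (birkhoffSum f φ n) K :=
  continuousOn_finsetSum _ fun k _ => hφ.comp (hf.iterate hmaps k) (hmaps.iterate k)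

theorem lowerSemicontinuousOn_birkhoffSup {φ : X → ℝ} (hmaps : Set.MapsTo f K K)
    (hf : ContinuousOn f K) (hφ : ContinuousOn φ K)
    (hbdd : ∀ x ∈ K, BddAbove (Set.range fun n => birkhoffSum f φ n x)) :
    LowerSemicontinuousOn (birkhoffSup f φ) K :=
  lowerSemicontinuousOn_ciSup hbdd fun n =>
    (continuousOn_birkhoffSum hmaps hf hφ n).lowerSemicontinuousOn

theorem IsMinimalOn.norm_birkhoffSum_le {E : Type*} [SeminormedAddCommGroup E] {φ : X → E}
    (hK : IsMinimalOn f K) (hf : ContinuousOn f K) (hφ : ContinuousOn φ K) {x₀ : X} (hx₀ : x₀ ∈ K)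
    {c : ℝ} (hc : ∀ n, ‖birkhoffSum f φ n x₀‖ ≤ c) {x : X} (hx : x ∈ K) (n : ℕ) :
    ‖birkhoffSum f φ n x‖ ≤ c + c := by
  have horbit : Set.range (fun k : ℕ => f^[k] x₀) ⊆ K :=
    Set.range_subset_iff.2 fun k => hK.mapsTo.iterate k hx₀
  have hcont : ContinuousWithinAt (birkhoffSum f φ n) (Set.range fun k : ℕ => f^[k] x₀) x :=
    (continuousOn_birkhoffSum hK.mapsTo hf hφ n x hx).mono horbit
  have hball : Set.MapsTo (birkhoffSum f φ n) (Set.range fun k : ℕ => f^[k] x₀)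
      (Metric.closedBall 0 (c + c)) := by
    rintro _ ⟨k, rfl⟩
    rw [mem_closedBall_zero_iff, ← add_sub_cancel_left (birkhoffSum f φ k x₀) (birkhoffSum _ _ _ _),
      ← birkhoffSum_add]
    exact norm_sub_le_of_le (hc _) (hc _)
  have hmem := hcont.mem_closure (hK.subset_closure_orbit x₀ hx₀ hx) hball
  rwa [Metric.isClosed_closedBall.closure_eq, mem_closedBall_zero_iff] at hmem

/-- **Gottschalk–Hedlund theorem**. -/
theorem IsMinimalOn.exists_coboundary {φ : X → ℝ} (hK : IsMinimalOn f K) (hf : ContinuousOn f K)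
    (hφ : ContinuousOn φ K) {x₀ : X} (hx₀ : x₀ ∈ K) {c : ℝ}
    (hc : ∀ n, ‖birkhoffSum f φ n x₀‖ ≤ c) :
    ∃ u : X → ℝ, ContinuousOn u K ∧ ∀ x ∈ K, φ x = u (f x) - u x := by
  have hbdd : ∀ x ∈ K, BddAbove (Set.range fun n => birkhoffSum f φ n x) := fun x hx =>
    ⟨c + c, Set.forall_mem_range.2 fun n =>
      (Real.le_norm_self _).trans (hK.norm_birkhoffSum_le hf hφ hx₀ hc hx n)⟩
  have hbdd_neg : ∀ x ∈ K, BddAbove (Set.range fun n => birkhoffSum f (-φ) n x) := fun x hx =>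
    ⟨c + c, Set.forall_mem_range.2 fun n => by
      rw [birkhoffSum_neg]
      exact (neg_le_abs _).trans (hK.norm_birkhoffSum_le hf hφ hx₀ hc hx n)⟩
  -- The sum of the two suprema is the oscillation of the Birkhoff sums at `x`.
  have hlsc := lowerSemicontinuousOn_birkhoffSup hK.mapsTo hf hφ hbdd
  have hlsc_neg := lowerSemicontinuousOn_birkhoffSup hK.mapsTo hf hφ.neg hbdd_neg
  have hle := fun x hx => add_birkhoffSup_apply_le (hbdd x hx)
  have hle_neg : ∀ x ∈ K, -φ x + birkhoffSup f (-φ) (f x) ≤ birkhoffSup f (-φ) x := fun x hx =>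
    add_birkhoffSup_apply_le (hbdd_neg x hx)
  have hosc : ∀ x ∈ K, ∀ y ∈ K, birkhoffSup f φ x + birkhoffSup f (-φ) x =
      birkhoffSup f φ y + birkhoffSup f (-φ) y := fun x hx y hy =>
    hK.eq_of_lowerSemicontinuousOn (hlsc.add hlsc_neg)
      (fun z hz => by linarith [hle z hz, hle_neg z hz]) hx hy
  refine ⟨-birkhoffSup f φ, ContinuousOn.neg <|
    continuousOn_of_lowerSemicontinuousOn_of_add_eq hlsc hlsc_neg fun x hx => hosc x hx x₀ hx₀,
    fun x hx => ?_⟩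
  simp only [Pi.neg_apply]
  linarith [hle x hx, hle_neg x hx, hosc x hx (f x) (hK.mapsTo hx)]

theorem IsMinimalOn.exists_coboundary_euclideanSpace {ι : Type*} [Fintype ι]
    {φ : X → EuclideanSpace ℝ ι} (hK : IsMinimalOn f K) (hf : ContinuousOn f K)
    (hφ : ContinuousOn φ K) {x₀ : X} (hx₀ : x₀ ∈ K) {c : ℝ}
    (hc : ∀ n, ‖birkhoffSum f φ n x₀‖ ≤ c) :
    ∃ u : X → EuclideanSpace ℝ ι, ContinuousOn u K ∧ ∀ x ∈ K, φ x = u (f x) - u x := by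
  have hcoord : ∀ i, ∃ u : X → ℝ, ContinuousOn u K ∧ ∀ x ∈ K, φ x i = u (f x) - u x := fun i =>
    hK.exists_coboundary (φ := EuclideanSpace.proj (𝕜 := ℝ) i ∘ φ) hf
      ((EuclideanSpace.proj i).continuous.comp_continuousOn hφ) hx₀ fun n => by
        rw [← map_birkhoffSum]
        exact (PiLp.norm_apply_le _ i).trans (hc n)
  choose u hu hφu using hcoord
  refine ⟨fun x => WithLp.toLp 2 fun i => u i x,
    (PiLp.continuous_toLp 2 _).comp_continuousOn (continuousOn_pi.2 hu), fun x hx => ?_⟩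
  ext i
  exact hφu i x hx

end GottschalkHedlund

section Kronecker

open MeasureTheory UnitAddTorus
open scoped Pointwise

variable {ι : Type*} [Fintype ι]

theorem mFourier_apply_add (m : ι → ℤ) (x v : UnitAddTorus ι) :
    mFourier m (x + v) = mFourier m x * mFourier m v := by
  simp only [mFourier, ContinuousMap.coe_mk, Pi.add_apply, fourier_apply, smul_add,
    AddCircle.toCircle_add, Circle.coe_mul, Finset.prod_mul_distrib]

theorem mFourierCoeff_eq_mul_of_apply_add {g : UnitAddTorus ι → ℂ} {v : UnitAddTorus ι}
    (hg : ∀ x, g (x + v) = g x) (m : ι → ℤ) :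
    mFourierCoeff g m = mFourierCoeff g m * mFourier (-m) v := by
  -- `mFourierCoeff` integrates against normalized Haar measure, which is not the instance `volume`.
  let μ : Measure (UnitAddTorus ι) := Measure.pi fun _ => AddCircle.haarAddCircle
  calc mFourierCoeff g m = ∫ x, mFourier (-m) x • g x ∂μ := rfl
    _ = ∫ x, mFourier (-m) (x + v) • g (x + v) ∂μ :=
        (integral_add_right_eq_self (μ := μ) (fun x => mFourier (-m) x • g x) v).symm
    _ = ∫ x, (mFourier (-m) x • g x) * mFourier (-m) v ∂μ := by
        simp only [hg, mFourier_apply_add, smul_eq_mul, mul_right_comm]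
    _ = mFourierCoeff g m * mFourier (-m) v := integral_mul_const _ _

theorem eq_mFourierCoeff_zero_of_apply_add {v : UnitAddTorus ι}
    (hv : ∀ m : ι → ℤ, m ≠ 0 → mFourier m v ≠ 1) {g : C(UnitAddTorus ι, ℂ)}
    (hg : ∀ x, g (x + v) = g x) (x : UnitAddTorus ι) : g x = mFourierCoeff g 0 := by
  have hcoeff : ∀ m ≠ 0, mFourierCoeff g m = 0 := fun m hm => by
    by_contra h0
    exact hv (-m) (neg_ne_zero.2 hm)
      ((mul_eq_left₀ h0).1 (mFourierCoeff_eq_mul_of_apply_add hg m).symm)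
  have hsummable : Summable (mFourierCoeff g) :=
    summable_of_ne_finset_zero (s := {0}) fun m hm => hcoeff m (Finset.notMem_singleton.1 hm)
  have hseries := hasSum_mFourier_series_apply_of_summable hsummable x
  have hsingle := hasSum_single (f := fun m => mFourierCoeff g m • mFourier m x) 0
    fun m hm => by simp only [hcoeff m hm, zero_smul]
  simpa only [mFourier_zero, ContinuousMap.one_apply, smul_eq_mul, mul_one] using
    hseries.unique hsingle

/-- **Kronecker's theorem**. -/
theorem denseRange_nsmul_of_mFourier_ne_one {v : UnitAddTorus ι}
    (hv : ∀ m : ι → ℤ, m ≠ 0 → mFourier m v ≠ 1) : DenseRange fun n : ℕ => n • v := by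
  rw [← denseRange_zsmul_iff_nsmul]
  let S : AddSubgroup (UnitAddTorus ι) := AddSubgroup.zmultiples v
  have hS : v +ᵥ (S : Set (UnitAddTorus ι)) = S :=
    vadd_coe_set (AddSubgroup.mem_zmultiples v)
  -- The distance to `S` is continuous and invariant under translation by `v`, hence constant.
  let g : C(UnitAddTorus ι, ℂ) := ⟨fun x => Metric.infDist x S, by fun_prop⟩
  have hg : ∀ x, g (x + v) = g x := fun x => by
    have hdist := Metric.infDist_image (isometry_vadd (UnitAddTorus ι) v) (x := x) (t := S)
    rw [Set.image_vadd, hS, vadd_eq_add, add_comm] at hdist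
    exact congrArg Complex.ofReal hdist
  intro x
  have hconst : g x = g 0 := by simp only [eq_mFourierCoeff_zero_of_apply_add hv hg]
  have hdist : Metric.infDist x S = 0 :=
    (Complex.ofReal_injective hconst).trans (Metric.infDist_zero_of_mem S.zero_mem)
  rw [← AddSubgroup.coe_zmultiples]
  exact (Metric.mem_closure_iff_infDist_zero ⟨0, S.zero_mem⟩).2 hdist

theorem eq_univ_of_mapsTo_add {G : Type*} [AddGroup G] [TopologicalSpace G]
    [ContinuousAdd G] {v : G} (hv : DenseRange fun n : ℕ => n • v) {A : Set G} (hA : IsClosed A)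
    (hne : A.Nonempty) (hmaps : Set.MapsTo (· + v) A A) : A = Set.univ := by
  obtain ⟨a, ha⟩ := hne
  have horbit : ∀ n : ℕ, a + n • v ∈ A := fun n => by
    induction n with
    | zero => rwa [zero_nsmul, add_zero]
    | succ n ih =>
      rw [succ_nsmul, ← add_assoc]
      exact hmaps ih
  have hsub : closure (Set.range fun n : ℕ => n • v) ⊆ (a + ·) ⁻¹' A :=
    closure_minimal (Set.range_subset_iff.2 horbit) (hA.preimage (continuous_const_add a))
  refine Set.eq_univ_of_forall fun x => ?_
  simpa only [Set.mem_preimage, add_neg_cancel_left] using hsub (hv (-a + x))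

end Kronecker

section Torus

variable {d : ℕ}

theorem isOpenQuotientMap_projT : IsOpenQuotientMap (projT : Rd d → Torus d) :=
  (IsOpenQuotientMap.piMap fun _ : Fin d =>
    (QuotientAddGroup.isOpenQuotientMap_mk :
      IsOpenQuotientMap ((↑) : ℝ → AddCircle (1 : ℝ)))).comp
    (EuclideanSpace.equiv (Fin d) ℝ).toHomeomorph.isOpenQuotientMap

theorem exists_eq_add_intVec_of_projT_eq {z w : Rd d} (h : projT z = projT w) :
    ∃ m, w = z + intVec m := by
  have hcoord : ∀ i, ∃ n : ℤ, w i = z i + n := fun i => by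
    have hzero : ((w i - z i : ℝ) : AddCircle (1 : ℝ)) = 0 := by
      rw [AddCircle.coe_sub, sub_eq_zero]
      exact (congrFun h i).symm
    obtain ⟨n, hn⟩ := AddCircle.coe_eq_zero_iff (1 : ℝ) |>.1 hzero
    exact ⟨n, by rw [← zsmul_one n, hn, add_sub_cancel]⟩
  choose m hm using hcoord
  exact ⟨m, by ext i; exact hm i⟩

theorem exists_continuous_comp_projT_eq {E : Type*} [TopologicalSpace E] {g : Rd d → E}
    (hg : Continuous g) (hper : ∀ z m, g (z + intVec m) = g z) :
    ∃ φ : Torus d → E, Continuous φ ∧ φ ∘ projT = g := by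
  have hfac : Function.FactorsThrough g projT := fun z w h => by
    obtain ⟨m, rfl⟩ := exists_eq_add_intVec_of_projT_eq h
    exact (hper z m).symm
  let p : C(Rd d, Torus d) := ⟨projT, isOpenQuotientMap_projT.continuous⟩
  have hp : IsQuotientMap p := isOpenQuotientMap_projT.isQuotientMap
  exact ⟨hp.lift ⟨g, hg⟩ hfac, ContinuousMap.continuous _,
    congrArg DFunLike.coe (hp.lift_comp ⟨g, hg⟩ hfac)⟩

theorem mFourier_projT (m : Fin d → ℤ) (z : Rd d) :
    UnitAddTorus.mFourier m (projT z) =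
      Complex.exp (2 * Real.pi * Complex.I * (∑ i, (m i : ℝ) * z i : ℝ)) := by
  simp [UnitAddTorus.mFourier, projT, ← Complex.exp_sum, Finset.mul_sum, mul_assoc]

theorem TotallyIrrational.mFourier_ne_one {ρ : Rd d} (hρ : TotallyIrrational fun i => ρ i)
    {m : Fin d → ℤ} (hm : m ≠ 0) : UnitAddTorus.mFourier m (projT ρ) ≠ 1 := by
  intro h
  rw [mFourier_projT, Complex.exp_eq_one_iff] at h
  obtain ⟨n, hn⟩ := h
  rw [mul_comm (n : ℂ)] at hn
  refine hm (hρ m n ?_).1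
  exact_mod_cast mul_left_cancel₀ Complex.two_pi_I_ne_zero hn

theorem TotallyIrrational.eq_univ_of_mapsTo_rotT {ρ : Rd d} (hρ : TotallyIrrational fun i => ρ i)
    {A : Set (Torus d)} (hA : IsClosed A) (hne : A.Nonempty)
    (hmaps : Set.MapsTo (rotT fun i => ρ i) A A) : A = Set.univ :=
  eq_univ_of_mapsTo_add (denseRange_nsmul_of_mFourier_ne_one fun _ => hρ.mFourier_ne_one) hA hne
    hmaps

end Torus

section SemiConjugacy

variable {d : ℕ} {f : Torus d → Torus d} {F : Rd d → Rd d} {K : Set (Torus d)} {ρ : Rd d}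

theorem exists_displacement_eq_add_coboundary (hF : Continuous F)
    (hFf : Function.Semiconj projT F f) (hFm : ∀ z m, F (z + intVec m) = F z + intVec m)
    (hK : IsMinimalOn f K) {z₀ : Rd d} (hz₀ : projT z₀ ∈ K) {c : ℝ}
    (hc : ∀ n : ℕ, ‖F^[n] z₀ - z₀ - (n : ℝ) • ρ‖ ≤ c) :
    ∃ u : Torus d → Rd d, ContinuousOn u K ∧
      ∀ z, projT z ∈ K → F z - z = ρ + (u (projT (F z)) - u (projT z)) := by
  obtain ⟨φ, hφ, hφF⟩ := exists_continuous_comp_projT_eq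
    (g := fun z => F z - z - ρ) (by fun_prop) fun z m => by
      rw [hFm, add_sub_add_right_eq_sub]
  have hf : Continuous f := isOpenQuotientMap_projT.continuous_comp_iff.1
    ((isOpenQuotientMap_projT.continuous.comp hF).congr hFf)
  have hsum : ∀ n, ‖birkhoffSum f φ n (projT z₀)‖ ≤ c := fun n => by
    rw [semiconj_birkhoffSum_apply hFf, hφF]
    simpa only [birkhoffSum_sub_sub_const, Nat.cast_smul_eq_nsmul] using hc n
  obtain ⟨u, hu, hφu⟩ :=
    hK.exists_coboundary_euclideanSpace hf.continuousOn hφ.continuousOn hz₀ hsum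
  refine ⟨u, hu, fun z hz => ?_⟩
  rw [hFf, ← hφu _ hz, ← Function.comp_apply (f := φ), hφF]
  exact (add_sub_cancel ρ _).symm

theorem statement0_general (hF : Continuous F) (hFf : Function.Semiconj projT F f)
    (hFm : ∀ z m, F (z + intVec m) = F z + intVec m) (hKc : IsCompact K) (hK : IsMinimalOn f K)
    (hρ : TotallyIrrational fun i => ρ i) {z₀ : Rd d} (hz₀ : projT z₀ ∈ K) {c : ℝ}
    (hc : ∀ n : ℕ, ‖F^[n] z₀ - z₀ - (n : ℝ) • ρ‖ ≤ c) :
    ∃ h : Torus d → Torus d, ContinuousOn h K ∧ h '' K = Set.univ ∧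
      (∀ x ∈ K, h (f x) = rotT (fun i => ρ i) (h x)) ∧
      ∃ H : Rd d → Rd d,
        (∀ z : Rd d, projT z ∈ K → projT (H z) = h (projT z)) ∧
        (∀ z : Rd d, projT z ∈ K → H (F z) = H z + ρ) ∧
        ∃ c : ℝ, ∀ z : Rd d, projT z ∈ K → ‖H z - z‖ ≤ c := by
  obtain ⟨u, hu, hFu⟩ := exists_displacement_eq_add_coboundary hF hFf hFm hK hz₀ hc
  let h : Torus d → Torus d := fun x => x - projT (u x)
  let H : Rd d → Rd d := fun z => z - u (projT z)
  have hcont : ContinuousOn h K :=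
    continuousOn_id.sub (isOpenQuotientMap_projT.continuous.comp_continuousOn hu)
  have hHF : ∀ z, projT z ∈ K → H (F z) = H z + ρ := fun z hz => by
    calc F z - u (projT (F z)) = F z - z - u (projT (F z)) + z := by abel
      _ = z - u (projT z) + ρ := by rw [hFu z hz]; abel
  have hrot : ∀ x ∈ K, h (f x) = rotT (fun i => ρ i) (h x) := fun x hx => by
    obtain ⟨z, rfl⟩ := isOpenQuotientMap_projT.surjective x
    rw [← hFf]
    exact congrArg projT (hHF z hx)
  have hsurj : h '' K = Set.univ :=
    hρ.eq_univ_of_mapsTo_rotT (hKc.image_of_continuousOn hcont).isClosed ⟨_, _, hz₀, rfl⟩ <|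
      Set.forall_mem_image.2 fun x hx => ⟨f x, hK.mapsTo hx, hrot x hx⟩
  obtain ⟨C, hC⟩ := hKc.exists_bound_of_continuousOn hu
  refine ⟨h, hcont, hsurj, hrot, H, fun _ _ => rfl, hHF, C, fun z hz => ?_⟩
  rw [norm_sub_rev, sub_sub_cancel]
  exact hC _ hz

end SemiConjugacy

theorem IsMinimalSet.isMinimalOn {d : ℕ} {f : Torus d ≃ₜ Torus d} {K : Set (Torus d)}
    (hK : IsMinimalSet f K) : IsMinimalOn f K :=
  ⟨Set.mapsTo_iff_image_subset.2 hK.2.2.1.subset, hK.2.2.2⟩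

/-- **Proposition A.**  If `f ∈ Homeo₀(𝕋^d)` has a minimal set `K` on which it is an
irrational pseudo-rotation with bounded mean motion, then `f|_K` is regularly
semi-conjugate to the irrational rotation `R_ρ` on `𝕋^d`. -/
theorem statement0 {d : ℕ} (f : Torus d ≃ₜ Torus d) (F : Rd d ≃ₜ Rd d) (hF : IsLift f F)
    (K : Set (Torus d)) (hK : IsMinimalSet f K) (ρ : Rd d)
    (hρ : TotallyIrrational (fun i => ρ i))
    (hpr : IsPseudoRotationOn F ρ K) (hbmm : BddMeanMotionOn F ρ K) :
    ∃ h : Torus d → Torus d, ContinuousOn h K ∧ h '' K = Set.univ ∧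
      (∀ x ∈ K, h (f x) = rotT (fun i => ρ i) (h x)) ∧
      ∃ H : Rd d → Rd d,
        (∀ z : Rd d, projT z ∈ K → projT (H z) = h (projT z)) ∧
        (∀ z : Rd d, projT z ∈ K → H (F z) = H z + ρ) ∧
        ∃ c : ℝ, ∀ z : Rd d, projT z ∈ K → ‖H z - z‖ ≤ c := by
  obtain ⟨z₀, hz₀⟩ := hK.1.preimage isOpenQuotientMap_projT.surjective
  obtain ⟨c, -, hc⟩ := hbmm
  exact statement0_general F.continuous hF.1 hF.2 hK.2.1 hK.isMinimalOn hρ hz₀ fun n => hc n z₀ hz₀
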